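/- arXiv:1809.07920 — 7 statements merged into one kernel-verified Lean document; each statement's English description precedes it below -/
import Mathlib

section
/- Let V be a nonempty finite type, let w be a conductance function on V whose support graph G_w is connected, and let L be its weighted Laplacian. If j : V → ℝ satisfies L j = δ_y − δ_z and j z = 0 for some y, z ∈ V, then 0 ≤ j x ≤ j y for every x ∈ V (the voltage attains its minimum at the grounded sink z and its maximum at the source y). -/
open Finset

/-!
Both bounds are instances of the maximum principle `le_of_laplacian_nonpos`: on a connected network,
a function whose Laplacian is nonpositive away from a vertex `a` attains its maximum at `a`.
Indeed, at a maximum point `x ≠ a` the Laplacian is a sum of nonnegative terms and is nonpositive,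
so every neighbour of `x` is again a maximum point; following a walk towards `a`, the maximum is
attained at `a`. The upper bound is the principle for `j` at the source `y`, the lower bound the
principle for `-j` at the sink `z`.
-/

/-- The maximum principle for functions subharmonic off a single vertex `a`. -/
lemma le_of_laplacian_nonpos {V : Type*} [Fintype V] (w : V → V → ℝ)
    (hnonneg : ∀ x y, 0 ≤ w x y) (G : SimpleGraph V)
    (hG : ∀ x y, G.Adj x y → 0 < w x y) (hconn : G.Connected) (a : V) (f : V → ℝ)
    (hf : ∀ x, x ≠ a → ∑ y, w x y * (f x - f y) ≤ 0) (x : V) : f x ≤ f a := by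
  have : Nonempty V := ⟨a⟩
  obtain ⟨m, hm⟩ := Finite.exists_max f
  have key : ∀ {u v : V}, G.Walk u v → v = a → f u = f m → f a = f m := by
    intro u v p
    induction p with
    | nil => rintro rfl h; exact h
    | @cons u v' v h p ih =>
      intro hv hu
      by_cases hua : u = a
      · rwa [← hua]
      refine ih hv ?_
      have hterm : ∀ y ∈ univ, 0 ≤ w u y * (f u - f y) := fun y _ =>
        mul_nonneg (hnonneg u y) (by linarith [hm y])
      have hzero := (sum_eq_zero_iff_of_nonneg hterm).1
        (le_antisymm (hf u hua) (sum_nonneg hterm)) v' (mem_univ _)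
      rcases mul_eq_zero.1 hzero with h0 | h0
      · exact absurd h0 (hG u v' h).ne'
      · linarith
  obtain ⟨p⟩ := hconn.preconnected m a
  rw [key p rfl rfl]
  exact hm x

/-- The voltage function grounded at the sink `z` for unit current from `y` to `z`
attains its minimum `0` at `z` and its maximum at the source `y`. -/
theorem stmt_2 {V : Type*} [Fintype V] [Nonempty V] [DecidableEq V]
    (w : V → V → ℝ)
    (hsymm : ∀ x y, w x y = w y x)
    (hnonneg : ∀ x y, 0 ≤ w x y)
    (hdiag : ∀ x, w x x = 0)
    (L : (V → ℝ) → (V → ℝ))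
    (hL : ∀ f x, L f x = ∑ y', w x y' * (f x - f y'))
    (G : SimpleGraph V)
    (hG : ∀ x y, G.Adj x y ↔ x ≠ y ∧ 0 < w x y)
    (hconn : G.Connected)
    (y z : V) (j : V → ℝ)
    (hj : L j = (fun x => (if x = y then (1 : ℝ) else 0) - (if x = z then (1 : ℝ) else 0)))
    (hjz : j z = 0) :
    ∀ x : V, 0 ≤ j x ∧ j x ≤ j y := by
  have hLj : ∀ x, ∑ y', w x y' * (j x - j y') =
      (if x = y then (1 : ℝ) else 0) - (if x = z then (1 : ℝ) else 0) := fun x => by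
    rw [← hL, hj]
  have hpos : ∀ x y, G.Adj x y → 0 < w x y := fun x y h => ((hG x y).1 h).2
  intro x
  constructor
  · have h := le_of_laplacian_nonpos w hnonneg G hpos hconn z (fun v => -j v) (fun v hv => by
      have hneg : ∑ y', w v y' * (-j v - -j y') = -∑ y', w v y' * (j v - j y') := by
        rw [← sum_neg_distrib]
        exact sum_congr rfl fun _ _ => by ring
      rw [hneg, hLj, if_neg hv]
      split_ifs <;> norm_num) x
    simp only [hjz] at h
    linarith
  · refine le_of_laplacian_nonpos w hnonneg G hpos hconn y j (fun v hv => ?_) x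
    rw [hLj, if_neg hv]
    split_ifs <;> norm_num
end

section
/- Let V be a nonempty finite type, let w be a conductance function on V whose support graph G_w is connected, and let L be its weighted Laplacian. Fix four points x, y, z, w₀ ∈ V. If f : V → ℝ satisfies L f = δ_y − δ_z and g : V → ℝ satisfies L g = δ_x − δ_{w₀}, then f x − f w₀ = g y − g z (the four-point "Magical Identity" for voltage functions: j_z^y(x) − j_z^y(w₀) = j_{w₀}^x(y) − j_{w₀}^x(z)). -/
/-!
The identity is the self-adjointness of the Laplacian, `∑ f · L g = ∑ g · L f`, which follows
from the symmetry of `w`. Pairing `f` with `L g = δ_x - δ_{w₀}` gives `f x - f w₀`, and pairing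
`g` with `L f = δ_y - δ_z` gives `g y - g z`.
-/

open Finset

/-- The four-point "Magical Identity" for voltage functions:
`j_z^y(x) − j_z^y(w₀) = j_{w₀}^x(y) − j_{w₀}^x(z)`. -/
theorem stmt_4 {V : Type*} [Fintype V] [Nonempty V] [DecidableEq V]
    (w : V → V → ℝ)
    (hsymm : ∀ x y, w x y = w y x)
    (hnonneg : ∀ x y, 0 ≤ w x y)
    (hdiag : ∀ x, w x x = 0)
    (L : (V → ℝ) → (V → ℝ))
    (hL : ∀ f x, L f x = ∑ y', w x y' * (f x - f y'))
    (G : SimpleGraph V)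
    (hG : ∀ x y, G.Adj x y ↔ x ≠ y ∧ 0 < w x y)
    (hconn : G.Connected)
    (x y z w₀ : V) (f g : V → ℝ)
    (hf : L f = (fun t => (if t = y then (1 : ℝ) else 0) - (if t = z then (1 : ℝ) else 0)))
    (hg : L g = (fun t => (if t = x then (1 : ℝ) else 0) - (if t = w₀ then (1 : ℝ) else 0))) :
    f x - f w₀ = g y - g z := by
  -- `L` is self-adjoint for the counting inner product; the `f a * g a` terms agree,
  -- and the cross terms are exchanged by swapping the two summation variables.
  have key : ∑ a, f a * L g a = ∑ a, g a * L f a := by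
    have cross : ∑ a, ∑ b, w a b * (f a * g b) = ∑ a, ∑ b, w a b * (g a * f b) := by
      rw [Finset.sum_comm]
      refine Finset.sum_congr rfl fun a _ => Finset.sum_congr rfl fun b _ => ?_
      rw [hsymm b a]
      ring
    have expand : ∀ p q : V → ℝ, ∑ a, p a * L q a =
        ∑ a, ∑ b, w a b * (p a * q a) - ∑ a, ∑ b, w a b * (p a * q b) := by
      intro p q
      simp only [hL, Finset.mul_sum, ← Finset.sum_sub_distrib]
      refine Finset.sum_congr rfl fun a _ => Finset.sum_congr rfl fun b _ => ?_
      ring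
    rw [expand f g, expand g f, cross]
    simp only [mul_comm (f _) (g _)]
  rw [hf, hg] at key
  simpa [mul_sub, Finset.sum_sub_distrib] using key
end

section
/- Slope–current principle: Let V be a nonempty finite type, let w be a conductance function on V whose support graph G_w is connected, and let L be its weighted Laplacian. Let d ≥ 0 and let D⁺, D⁻ : V → ℝ be nonnegative functions with ∑_{x ∈ V} D⁺ x = ∑_{x ∈ V} D⁻ x = d. If f : V → ℝ satisfies L f = D⁺ − D⁻, then for all x, y ∈ V the current through the edge {x, y} is bounded by the total injected current: w x y * |f x − f y| ≤ d. -/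
/-!
Every current crossing a level set of the potential flows downhill. For an edge `{x, y}` with
`f y < f x`, put `S = {z | f x ≤ f z}`. Summing `L f` over `S`, the currents inside `S` cancel by
antisymmetry (`sum_current_self`), so the sum is the total current from `S` to its complement.
The currents across this cut are nonnegative, since `f` is larger on `S` than off `S`, and the
current from `x` to `y` is one of them (`current_le_sum_superlevel`). On the other hand the sum is `∑_S (D⁺ - D⁻) ≤ d`.
-/

open Finset

lemma sum_current_self {V : Type*} (w : V → V → ℝ) (hsymm : ∀ x y, w x y = w y x)
    (f : V → ℝ) (S : Finset V) : ∑ z ∈ S, ∑ u ∈ S, w z u * (f z - f u) = 0 := by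
  have h : ∑ z ∈ S, ∑ u ∈ S, w z u * (f z - f u)
      = -∑ z ∈ S, ∑ u ∈ S, w z u * (f z - f u) := by
    conv_lhs => rw [Finset.sum_comm]
    simp only [← Finset.sum_neg_distrib]
    refine Finset.sum_congr rfl fun z _ => Finset.sum_congr rfl fun u _ => ?_
    rw [hsymm u z]
    ring
  linarith

/-- The level-set cut bound: a downhill current is at most the net current injected into the
superlevel set of its source. -/
lemma current_le_sum_superlevel {V : Type*} [Fintype V] (w : V → V → ℝ)
    (hsymm : ∀ x y, w x y = w y x) (hnonneg : ∀ x y, 0 ≤ w x y) (f : V → ℝ) {x y : V}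
    (hxy : f y < f x) :
    w x y * (f x - f y) ≤ ∑ z with f x ≤ f z, ∑ u, w z u * (f z - f u) := by
  have hsplit : ∑ z with f x ≤ f z, ∑ u, w z u * (f z - f u)
      = ∑ z with f x ≤ f z, ∑ u with ¬ f x ≤ f u, w z u * (f z - f u) := by
    have h0 := sum_current_self w hsymm f {z | f x ≤ f z}
    rw [← zero_add (∑ z with f x ≤ f z, ∑ u with ¬ f x ≤ f u, w z u * (f z - f u)), ← h0,
      ← Finset.sum_add_distrib]
    exact Finset.sum_congr rfl fun z _ => (Finset.sum_filter_add_sum_filter_not _ _ _).symm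
  have hpos : ∀ z, f x ≤ f z → ∀ u ∈ ({u | ¬ f x ≤ f u} : Finset V),
      0 ≤ w z u * (f z - f u) := by
    intro z hz u hu
    have hu' : f u < f x := by simpa using hu
    exact mul_nonneg (hnonneg z u) (by linarith)
  rw [hsplit]
  calc w x y * (f x - f y) ≤ ∑ u with ¬ f x ≤ f u, w x u * (f x - f u) :=
        Finset.single_le_sum (f := fun u => w x u * (f x - f u)) (hpos x le_rfl)
          (by simpa using hxy)
    _ ≤ _ := Finset.single_le_sum
        (f := fun z => ∑ u with ¬ f x ≤ f u, w z u * (f z - f u))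
        (fun z hz => Finset.sum_nonneg (hpos z (by simpa using hz))) (by simp)

/-- Slope–current principle: if `L f = D⁺ − D⁻` where `D⁺, D⁻ ≥ 0` both have total mass `d`,
then the current through any edge is at most the total injected current `d`. -/
theorem stmt_5 {V : Type*} [Fintype V] [Nonempty V]
    (w : V → V → ℝ)
    (hsymm : ∀ x y, w x y = w y x)
    (hnonneg : ∀ x y, 0 ≤ w x y)
    (hdiag : ∀ x, w x x = 0)
    (L : (V → ℝ) → (V → ℝ))
    (hL : ∀ f x, L f x = ∑ y', w x y' * (f x - f y'))
    (G : SimpleGraph V)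
    (hG : ∀ x y, G.Adj x y ↔ x ≠ y ∧ 0 < w x y)
    (hconn : G.Connected)
    (d : ℝ) (hd : 0 ≤ d)
    (Dplus Dminus : V → ℝ)
    (hDplus : ∀ x, 0 ≤ Dplus x) (hDminus : ∀ x, 0 ≤ Dminus x)
    (hdplus : ∑ x, Dplus x = d) (hdminus : ∑ x, Dminus x = d)
    (f : V → ℝ) (hf : L f = fun x => Dplus x - Dminus x) :
    ∀ x y : V, w x y * |f x - f y| ≤ d := by
  have key : ∀ x y, f y < f x → w x y * (f x - f y) ≤ d := by
    intro x y hxy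
    calc w x y * (f x - f y) ≤ ∑ z with f x ≤ f z, ∑ u, w z u * (f z - f u) :=
          current_le_sum_superlevel w hsymm hnonneg f hxy
      _ = ∑ z with f x ≤ f z, (Dplus z - Dminus z) :=
          Finset.sum_congr rfl fun z _ => by rw [← hL, hf]
      _ ≤ ∑ z with f x ≤ f z, Dplus z :=
          Finset.sum_le_sum fun z _ => by linarith [hDminus z]
      _ ≤ ∑ z, Dplus z :=
          Finset.sum_le_sum_of_subset_of_nonneg (Finset.filter_subset _ _) fun z _ _ => hDplus z
      _ = d := hdplus
  intro x y
  rcases lt_trichotomy (f x) (f y) with h | h | h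
  · rw [abs_sub_comm, abs_of_pos (sub_pos.2 h), hsymm]
    exact key y x h
  · simpa [h] using hd
  · rw [abs_of_pos (sub_pos.2 h)]
    exact key x y h
end

section
/- Let V be a nonempty finite type, let w be a conductance function on V whose support graph G_w is connected, and let L be its weighted Laplacian. If x ≠ y and f : V → ℝ satisfies L f = δ_x − δ_y, then f x − f y > 0; that is, the effective resistance r(x, y) between two distinct points of a connected network is strictly positive. -/
open Finset

/-!
The proof is the energy identity `∑ t, f t * (L f) t = ½ ∑ t s, w t s * (f t - f s) ^ 2`
(summation by parts, `energy_identity`). For `L f = δ_x - δ_y` the left side is `f x - f y`,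
which is therefore nonnegative. If it vanished, every `w t s * (f t - f s) ^ 2` would vanish,
hence every current `w t s * (f t - f s)` too, and `L f` would be zero, contradicting
`(L f) x = 1`.
-/

/-- Twice the pairing of `f` with its Laplacian is the Dirichlet energy, summed over ordered
pairs. -/
lemma energy_identity {V : Type*} [Fintype V] (w : V → V → ℝ)
    (hsymm : ∀ x y, w x y = w y x) (f : V → ℝ) :
    2 * ∑ t, f t * ∑ s, w t s * (f t - f s) = ∑ t, ∑ s, w t s * (f t - f s) ^ 2 := by
  have h : ∑ t, f t * ∑ s, w t s * (f t - f s) = ∑ t, ∑ s, f s * (w t s * (f s - f t)) := by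
    rw [Finset.sum_comm]
    refine Finset.sum_congr rfl fun t _ => ?_
    rw [Finset.mul_sum]
    exact Finset.sum_congr rfl fun s _ => by rw [hsymm]
  rw [two_mul]
  nth_rewrite 2 [h]
  rw [← Finset.sum_add_distrib]
  refine Finset.sum_congr rfl fun t _ => ?_
  rw [Finset.mul_sum, ← Finset.sum_add_distrib]
  exact Finset.sum_congr rfl fun s _ => by ring

/-- The effective resistance between two distinct points of a connected network is
strictly positive: if `L f = δ_x − δ_y` with `x ≠ y` then `f x − f y > 0`. -/
theorem stmt_6 {V : Type*} [Fintype V] [Nonempty V] [DecidableEq V]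
    (w : V → V → ℝ)
    (hsymm : ∀ x y, w x y = w y x)
    (hnonneg : ∀ x y, 0 ≤ w x y)
    (hdiag : ∀ x, w x x = 0)
    (L : (V → ℝ) → (V → ℝ))
    (hL : ∀ f x, L f x = ∑ y', w x y' * (f x - f y'))
    (G : SimpleGraph V)
    (hG : ∀ x y, G.Adj x y ↔ x ≠ y ∧ 0 < w x y)
    (hconn : G.Connected)
    (x y : V) (hxy : x ≠ y) (f : V → ℝ)
    (hf : L f = (fun t => (if t = x then (1 : ℝ) else 0) - (if t = y then (1 : ℝ) else 0))) :
    0 < f x - f y := by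
  have hE := energy_identity w hsymm f
  have hpair : ∑ t, f t * ∑ s, w t s * (f t - f s) = f x - f y := by
    simp_rw [← hL, hf, mul_sub, Finset.sum_sub_distrib]
    simp
  have hterm : ∀ t s, 0 ≤ w t s * (f t - f s) ^ 2 := fun t s =>
    mul_nonneg (hnonneg t s) (sq_nonneg _)
  by_contra hle
  have hzero : ∑ t, ∑ s, w t s * (f t - f s) ^ 2 = 0 :=
    le_antisymm (by linarith)
      (Finset.sum_nonneg fun t _ => Finset.sum_nonneg fun s _ => hterm t s)
  rw [Finset.sum_eq_zero_iff_of_nonneg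
    fun t _ => Finset.sum_nonneg fun s _ => hterm t s] at hzero
  have hx := hzero x (Finset.mem_univ x)
  rw [Finset.sum_eq_zero_iff_of_nonneg fun s _ => hterm x s] at hx
  have hLx : L f x = 0 := by
    rw [hL]
    refine Finset.sum_eq_zero fun s hs => ?_
    rcases mul_eq_zero.mp (hx s hs) with h | h
    · rw [h, zero_mul]
    · rw [pow_eq_zero_iff two_ne_zero |>.mp h, mul_zero]
  rw [hf] at hLx
  simp [hxy] at hLx
end

section
/- Parallel rule for effective resistance: Let V be a nonempty finite type and w a conductance function on V. Let u ≠ v with w u v > 0, and let w' be the conductance function agreeing with w except that w' u v = w' v u = 0 (the edge e = {u, v} is deleted). Assume the support graph of w' is connected, and let L, L' be the weighted Laplacians of w, w'. If L f = δ_u − δ_v and L' f' = δ_u − δ_v, then f u − f v > 0, f' u − f' v > 0, and 1/(f u − f v) = w u v + 1/(f' u − f' v). In other words, writing R_e = 1/(w u v) for the resistance of the edge e and R_{Γ∖e} = f' u − f' v for the effective resistance between its endpoints after deleting e, the effective resistance satisfies r(u, v) = R_e · R_{Γ∖e} / (R_e + R_{Γ∖e}), so the canonical measure of the edge is μ(e)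 = 1 − w u v · r(u, v) = R_e / (R_e + R_{Γ∖e}). -/
/-!
The proof rests on Green's identity
`2 ∑ x, g x * (Δ f) x = ∑ x, ∑ y, w x y * (g x - g y) * (f x - f y)`, whose right-hand side is
symmetric in `f` and `g`. Write `c = w u v`, `d = f u - f v`, `d' = f' u - f' v`.

Removing the edge only affects the Laplacian at `u` and `v`, so
`L' f = (1 - c * d) • (δ_u - δ_v)`. Pairing this with `f'`, and using the symmetry of `L'` together
with `L' f' = δ_u - δ_v`, gives `d = (1 - c * d) * d'`, which is the parallel rule after division.
Green's identity with `f = g = f'` shows that `2 * d'` is the energy of `f'`. It is positive, since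
vanishing energy would force `L' f' = 0`; then `d * (1 + c * d') = d'` forces `d > 0`.
-/

open Finset

/-- Green's identity for a weighted Laplacian. -/
lemma two_mul_sum_mul_laplacian {V : Type*} [Fintype V] (w : V → V → ℝ)
    (hsymm : ∀ x y, w x y = w y x) (f g : V → ℝ) :
    2 * ∑ x, g x * ∑ y, w x y * (f x - f y)
      = ∑ x, ∑ y, w x y * (g x - g y) * (f x - f y) := by
  have h1 : ∑ x, g x * ∑ y, w x y * (f x - f y)
      = ∑ x, ∑ y, g x * (w x y * (f x - f y)) := by
    simp only [Finset.mul_sum]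
  have h2 : ∑ x, g x * ∑ y, w x y * (f x - f y)
      = ∑ x, ∑ y, g y * (w x y * (f y - f x)) := by
    rw [h1, Finset.sum_comm]
    simp only [hsymm]
  rw [two_mul]
  nth_rewrite 1 [h1]
  rw [h2]
  simp only [← Finset.sum_add_distrib]
  refine Finset.sum_congr rfl fun x _ => Finset.sum_congr rfl fun y _ => ?_
  ring

/-- Parallel rule for effective resistance: deleting an edge `e = {u,v}` of conductance
`w u v` (resistance `R_e = 1/(w u v)`), the effective resistances satisfy
`1/r(u,v) = w u v + 1/R_{Γ∖e}`, i.e. `r(u,v) = R_e · R_{Γ∖e}/(R_e + R_{Γ∖e})`. -/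
theorem stmt_7 {V : Type*} [Fintype V] [Nonempty V] [DecidableEq V]
    (w : V → V → ℝ)
    (hsymm : ∀ x y, w x y = w y x)
    (hnonneg : ∀ x y, 0 ≤ w x y)
    (hdiag : ∀ x, w x x = 0)
    (u v : V) (huv : u ≠ v) (hwuv : 0 < w u v)
    (w' : V → V → ℝ)
    (hw' : ∀ a b, w' a b = if (a = u ∧ b = v) ∨ (a = v ∧ b = u) then 0 else w a b)
    (L L' : (V → ℝ) → (V → ℝ))
    (hL : ∀ f x, L f x = ∑ y', w x y' * (f x - f y'))
    (hL' : ∀ f x, L' f x = ∑ y', w' x y' * (f x - f y'))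
    (G' : SimpleGraph V)
    (hG' : ∀ x y, G'.Adj x y ↔ x ≠ y ∧ 0 < w' x y)
    (hconn' : G'.Connected)
    (f f' : V → ℝ)
    (hf : L f = (fun t => (if t = u then (1 : ℝ) else 0) - (if t = v then (1 : ℝ) else 0)))
    (hf' : L' f' = (fun t => (if t = u then (1 : ℝ) else 0) - (if t = v then (1 : ℝ) else 0))) :
    0 < f u - f v ∧ 0 < f' u - f' v ∧
      1 / (f u - f v) = w u v + 1 / (f' u - f' v) := by
  have hsymm' : ∀ x y, w' x y = w' y x := by
    intro x y
    rw [hw', hw', hsymm x y]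
    exact if_congr (by tauto) rfl rfl
  have hnonneg' : ∀ x y, 0 ≤ w' x y := by
    intro x y
    rw [hw']
    split_ifs
    exacts [le_rfl, hnonneg x y]
  have pairing : ∀ (g : V → ℝ) (a : ℝ),
      ∑ x, g x * (a * ((if x = u then (1 : ℝ) else 0) - (if x = v then (1 : ℝ) else 0)))
        = a * (g u - g v) := by
    intro g a
    simp [mul_sub, Finset.sum_sub_distrib, mul_comm]
  have hLf' : ∀ x, ∑ y, w' x y * (f' x - f' y)
      = 1 * ((if x = u then (1 : ℝ) else 0) - (if x = v then (1 : ℝ) else 0)) := by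
    intro x
    rw [← hL', hf', one_mul]
  have hLf : ∀ x, ∑ y, w' x y * (f x - f y)
      = (1 - w u v * (f u - f v))
        * ((if x = u then (1 : ℝ) else 0) - (if x = v then (1 : ℝ) else 0)) := by
    intro x
    have h := congrFun hf x
    rw [hL] at h
    have hterm : ∀ y, w' x y * (f x - f y) = w x y * (f x - f y)
        - ((if y = v then (if x = u then w u v * (f u - f v) else 0) else 0)
          - (if y = u then (if x = v then w u v * (f u - f v) else 0) else 0)) := by
      intro y
      have := hsymm u v
      rw [hw']
      grind
    simp only [hterm, Finset.sum_sub_distrib, h, Finset.sum_ite_eq', Finset.mem_univ, if_true]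
    split_ifs <;> ring
  have key : f u - f v = (1 - w u v * (f u - f v)) * (f' u - f' v) := by
    have h1 := two_mul_sum_mul_laplacian w' hsymm' f f'
    have h2 := two_mul_sum_mul_laplacian w' hsymm' f' f
    have h3 : ∑ x, ∑ y, w' x y * (f' x - f' y) * (f x - f y)
        = ∑ x, ∑ y, w' x y * (f x - f y) * (f' x - f' y) := by
      simp only [mul_right_comm]
    simp only [hLf, hLf', pairing] at h1 h2
    linarith
  have energy := two_mul_sum_mul_laplacian w' hsymm' f' f'
  simp only [hLf', pairing] at energy
  have hterm_nonneg : ∀ x y, 0 ≤ w' x y * (f' x - f' y) * (f' x - f' y) := fun x y => by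
    rw [mul_assoc]
    exact mul_nonneg (hnonneg' x y) (mul_self_nonneg _)
  have hd' : 0 < f' u - f' v := by
    by_contra hneg
    -- The `u` row of the energy vanishes, hence so does `L' f'` at `u`, where it should be `1`.
    have hrow_nonneg : ∀ x, 0 ≤ ∑ y, w' x y * (f' x - f' y) * (f' x - f' y) := fun x =>
      Finset.sum_nonneg fun y _ => hterm_nonneg x y
    have hrow_le := Finset.single_le_sum (fun x _ => hrow_nonneg x) (Finset.mem_univ u)
    have hrow : ∑ y, w' u y * (f' u - f' y) * (f' u - f' y) = 0 :=
      le_antisymm (by linarith) (hrow_nonneg u)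
    rw [Finset.sum_eq_zero_iff_of_nonneg fun y _ => hterm_nonneg u y] at hrow
    have hzero : ∑ y, w' u y * (f' u - f' y) = 0 := by
      refine Finset.sum_eq_zero fun y hy => ?_
      rcases mul_eq_zero.mp (hrow y hy) with h | h
      · exact h
      · rw [h, mul_zero]
    rw [hLf' u] at hzero
    simp [huv] at hzero
  have hpos : 0 < 1 + w u v * (f' u - f' v) := by positivity
  have hd : 0 < f u - f v := by
    refine pos_of_mul_pos_left (b := 1 + w u v * (f' u - f' v)) ?_ hpos.le
    linarith
  refine ⟨hd, hd', ?_⟩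
  rw [div_eq_iff hd.ne', add_mul, div_mul_eq_mul_div, one_mul]
  have : (f u - f v) / (f' u - f' v) = 1 - w u v * (f u - f v) := by
    rw [div_eq_iff hd'.ne', ← key]
  rw [this]
  ring
end

section
/- Foster's theorem: Let V be a nonempty finite type, let w be a conductance function on V whose support graph G_w is connected, and let L be its weighted Laplacian. Suppose that for each ordered pair (x, y) ∈ V × V a function f_{x y} : V → ℝ satisfies L f_{x y} = δ_x − δ_y. Then (1/2) · ∑_{x ∈ V} ∑_{y ∈ V} w x y * (f_{x y} x − f_{x y} y) = card V − 1. Equivalently, the sum over the edges e = {u, v} of G_w of the ratio r(u, v)/R_e of effective resistance to edge resistance equals card V − 1, which amounts to the statement that the total canonical measure ∑_e μ(e) = ∑_e (1 − w u v · r(u, v)) equals the genus #E(G_w) − card V + 1. -/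
open Finset

/-!
Fix a root `o` and write `g x = F x o`, so that `L (g x) = δ_x - δ_o`. The function
`F x y - (g x - g y)` is harmonic, and a harmonic function has zero Dirichlet energy, hence does
not vary along any edge (`edge_flow_eq_zero`). Therefore
`w x y * (F x y x - F x y y) = w x y * (g x x - g x y) + w x y * (g y y - g y x)`.
By symmetry of `w` both terms have the same double sum, and that sum is
`∑ x, L (g x) x = ∑ x, (1 - δ_o x) = card V - 1`.
-/

/-- A harmonic function carries no current along any edge: pairing `L h = 0` with `h` and
symmetrizing shows that the Dirichlet energy `∑ x, ∑ y, w x y * (h x - h y) ^ 2` vanishes. -/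
lemma edge_flow_eq_zero {V : Type*} [Fintype V] (w : V → V → ℝ)
    (hsymm : ∀ x y, w x y = w y x) (hnonneg : ∀ x y, 0 ≤ w x y) (h : V → ℝ)
    (hh : ∀ x, ∑ y, w x y * (h x - h y) = 0) (x y : V) : w x y * (h x - h y) = 0 := by
  have pairing : ∑ x, ∑ y, h x * (w x y * (h x - h y)) = 0 := by
    simp [← mul_sum, hh]
  have pairing_swap : ∑ x, ∑ y, h y * (w x y * (h y - h x)) = 0 := by
    rw [sum_comm, ← pairing]
    exact sum_congr rfl fun a _ => sum_congr rfl fun b _ => by rw [hsymm b a]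
  have energy : ∑ x, ∑ y, w x y * (h x - h y) ^ 2 = 0 := by
    calc ∑ x, ∑ y, w x y * (h x - h y) ^ 2
        = ∑ x, ∑ y, h x * (w x y * (h x - h y)) + ∑ x, ∑ y, h y * (w x y * (h y - h x)) := by
          simp only [← sum_add_distrib]
          exact sum_congr rfl fun a _ => sum_congr rfl fun b _ => by ring
      _ = 0 := by rw [pairing, pairing_swap, add_zero]
  have nonneg (a b : V) : 0 ≤ w a b * (h a - h b) ^ 2 := mul_nonneg (hnonneg a b) (sq_nonneg _)
  have hx := (sum_eq_zero_iff_of_nonneg fun a _ => sum_nonneg fun b _ => nonneg a b).1 energy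
    x (mem_univ x)
  have hxy := (sum_eq_zero_iff_of_nonneg fun b _ => nonneg x b).1 hx y (mem_univ y)
  simpa using hxy

/-- Foster's theorem: summing the ratio of effective resistance to edge resistance over
all edges (each unordered edge counted once, whence the factor `1/2` over ordered pairs)
gives `card V − 1`. -/
theorem stmt_8 {V : Type*} [Fintype V] [Nonempty V] [DecidableEq V]
    (w : V → V → ℝ)
    (hsymm : ∀ x y, w x y = w y x)
    (hnonneg : ∀ x y, 0 ≤ w x y)
    (hdiag : ∀ x, w x x = 0)
    (L : (V → ℝ) → (V → ℝ))
    (hL : ∀ f x, L f x = ∑ y', w x y' * (f x - f y'))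
    (G : SimpleGraph V)
    (hG : ∀ x y, G.Adj x y ↔ x ≠ y ∧ 0 < w x y)
    (hconn : G.Connected)
    (F : V → V → V → ℝ)
    (hF : ∀ x y, L (F x y) =
      (fun t => (if t = x then (1 : ℝ) else 0) - (if t = y then (1 : ℝ) else 0))) :
    (1 / 2 : ℝ) * ∑ x, ∑ y, w x y * (F x y x - F x y y) = (Fintype.card V : ℝ) - 1 := by
  obtain ⟨o⟩ := ‹Nonempty V›
  have lap (x y t : V) : ∑ s, w t s * (F x y t - F x y s)
      = (if t = x then (1 : ℝ) else 0) - (if t = y then (1 : ℝ) else 0) := by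
    rw [← hL, hF]
  have split (x y : V) : w x y * (F x y x - F x y y)
      = w x y * (F x o x - F x o y) + w x y * (F y o y - F y o x) := by
    have flow := edge_flow_eq_zero w hsymm hnonneg (fun t => F x y t - (F x o t - F y o t))
      (fun t => by
        calc ∑ s, w t s * (F x y t - (F x o t - F y o t) - (F x y s - (F x o s - F y o s)))
            = ∑ s, w t s * (F x y t - F x y s) - ∑ s, w t s * (F x o t - F x o s)
              + ∑ s, w t s * (F y o t - F y o s) := by
              rw [← sum_sub_distrib, ← sum_add_distrib]
              exact sum_congr rfl fun s _ => by ring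
          _ = 0 := by rw [lap, lap, lap]; ring) x y
    linear_combination flow
  have half : ∑ x, ∑ y, w x y * (F x o x - F x o y) = (Fintype.card V : ℝ) - 1 := by
    simp [lap]
  have half_swap : ∑ x, ∑ y, w x y * (F y o y - F y o x) = (Fintype.card V : ℝ) - 1 := by
    rw [sum_comm, ← half]
    exact sum_congr rfl fun a _ => sum_congr rfl fun b _ => by rw [hsymm b a]
  simp only [split, sum_add_distrib]
  rw [half, half_swap]
  ring
end

section
/- Let V be a nonempty finite type, let w be a conductance function on V whose support graph G_w is connected, and let L be its weighted Laplacian. Let u, v ∈ V be adjacent in G_w (i.e. u ≠ v and w u v > 0), and let f : V → ℝ satisfy L f = δ_u − δ_v. Then 0 < w u v * (f u − f v) ≤ 1, and w u v * (f u − f v) = 1 if and only if the edge {u, v} is a bridge of G_w (i.e. it lies in no cycle of G_w, equivalently deleting it disconnects u from v). Equivalently, the canonical measure μ(e) = 1 − w u v · r(u, v) of the edge e = {u, v} satisfies 0 ≤ μ(e) < 1, with μ(e) = 0 if and only if e is a bridge. -/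
open Finset

/-!
Discrete Green's formula: if `L f = δ_u − δ_v`, then for every test function `g`,
`2 (g u − g v) = ∑_{x,y} w x y (f x − f y) (g x − g y)`. Write `c = w u v` and `d = f u − f v`.

* Testing with `g = f` gives twice `d` as an energy, so `d ≥ 0`; if `d = 0`, every current vanishes
  and `L f u = 0 ≠ 1`.
* Isolating the two ordered pairs belonging to the edge `{u, v}` gives
  `2 (1 − c d) (g u − g v) = ∑ w x y (f x − f y) (g x − g y)` over the remaining pairs
  (`green_without_edge`). With `g = f` the right side is nonnegative, so `c d ≤ 1`.
* If `c d = 1`, this remaining energy vanishes, so `f` is constant on the components of the graph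
  without the edge; as `f u ≠ f v`, the edge is a bridge.
* If the edge is a bridge, take for `g` the indicator of the component of `u` after deletion: the
  right side is zero and `g u − g v = 1`, so `c d = 1`.
-/

/-- Discrete Green's formula for a unit current from `u` to `v`. -/
lemma green_formula {V : Type*} [Fintype V] [DecidableEq V] (w : V → V → ℝ)
    (hsymm : ∀ x y, w x y = w y x) (u v : V) (f g : V → ℝ)
    (hf : ∀ t, ∑ y, w t y * (f t - f y)
      = (if t = u then (1 : ℝ) else 0) - (if t = v then (1 : ℝ) else 0)) :
    ∑ x, ∑ y, w x y * (f x - f y) * (g x - g y) = 2 * (g u - g v) := by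
  have h1 : ∑ x, ∑ y, w x y * (f x - f y) * g x = g u - g v := by
    simp_rw [← Finset.sum_mul, hf, sub_mul, Finset.sum_sub_distrib]
    simp
  have h2 : ∑ x, ∑ y, w x y * (f x - f y) * g y = -(g u - g v) := by
    rw [Finset.sum_comm, ← h1, ← Finset.sum_neg_distrib]
    refine Finset.sum_congr rfl fun x _ => ?_
    rw [← Finset.sum_neg_distrib]
    refine Finset.sum_congr rfl fun y _ => ?_
    rw [hsymm y x]
    ring
  simp_rw [mul_sub _ (g _) (g _), Finset.sum_sub_distrib]
  rw [h1, h2]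
  ring

/-- Green's formula with the contribution of the edge `{u, v}` moved to the other side. -/
lemma green_without_edge {V : Type*} [Fintype V] [DecidableEq V] (w : V → V → ℝ)
    (hsymm : ∀ x y, w x y = w y x) (u v : V) (huv : u ≠ v) (f g : V → ℝ)
    (hf : ∀ t, ∑ y, w t y * (f t - f y)
      = (if t = u then (1 : ℝ) else 0) - (if t = v then (1 : ℝ) else 0)) :
    ∑ x, ∑ y, (if s(x, y) = s(u, v) then 0 else w x y * (f x - f y) * (g x - g y))
      = 2 * (1 - w u v * (f u - f v)) * (g u - g v) := by
  have hsplit : ∀ x y : V,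
      (if s(x, y) = s(u, v) then 0 else w x y * (f x - f y) * (g x - g y))
        = w x y * (f x - f y) * (g x - g y)
          - (if x = u then (if y = v then w u v * (f u - f v) * (g u - g v) else 0) else 0)
          - (if x = v then (if y = u then w u v * (f u - f v) * (g u - g v) else 0) else 0) := by
    intro x y
    have := hsymm v u
    simp only [Sym2.eq_iff]
    by_cases h1 : x = u ∧ y = v
    · obtain ⟨rfl, rfl⟩ := h1
      simp [huv]
    · by_cases h2 : x = v ∧ y = u
      · obtain ⟨rfl, rfl⟩ := h2
        simp only [huv.symm, and_self, or_true, if_true, if_false, this]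
        ring
      · rw [if_neg (by tauto)]
        simp only [← ite_and, if_neg h1, if_neg h2, sub_zero]
  simp_rw [hsplit, Finset.sum_sub_distrib]
  rw [green_formula w hsymm u v f g hf]
  have hpair : ∀ (a b : V) (r : ℝ),
      ∑ x, ∑ y, (if x = a then (if y = b then r else 0) else 0) = r := by
    intro a b r
    rw [Finset.sum_eq_single a (fun x _ hx => by simp [hx]) (by simp)]
    simp
  rw [hpair, hpair]
  ring

/-- For an edge `{u,v}` of a connected network, the current `w u v * (f u − f v)` through
the edge under unit current from `u` to `v` lies in `(0, 1]`, and equals `1` precisely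
when the edge is a bridge.  Equivalently the canonical measure
`μ(e) = 1 − w u v · r(u,v)` satisfies `0 ≤ μ(e) < 1`, with `μ(e) = 0` iff `e` is a bridge. -/
theorem stmt_9 {V : Type*} [Fintype V] [Nonempty V] [DecidableEq V]
    (w : V → V → ℝ)
    (hsymm : ∀ x y, w x y = w y x)
    (hnonneg : ∀ x y, 0 ≤ w x y)
    (hdiag : ∀ x, w x x = 0)
    (L : (V → ℝ) → (V → ℝ))
    (hL : ∀ f x, L f x = ∑ y', w x y' * (f x - f y'))
    (G : SimpleGraph V)
    (hG : ∀ x y, G.Adj x y ↔ x ≠ y ∧ 0 < w x y)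
    (hconn : G.Connected)
    (u v : V) (huv : u ≠ v) (hwuv : 0 < w u v)
    (f : V → ℝ)
    (hf : L f = (fun t => (if t = u then (1 : ℝ) else 0) - (if t = v then (1 : ℝ) else 0))) :
    0 < w u v * (f u - f v) ∧ w u v * (f u - f v) ≤ 1 ∧
      (w u v * (f u - f v) = 1 ↔ G.IsBridge s(u, v)) := by
  have hf' : ∀ t, ∑ y, w t y * (f t - f y)
      = (if t = u then (1 : ℝ) else 0) - (if t = v then (1 : ℝ) else 0) := by
    intro t
    rw [← hL, hf]
  have hterm : ∀ x y, 0 ≤ w x y * (f x - f y) * (f x - f y) := fun x y => by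
    rw [mul_assoc]
    exact mul_nonneg (hnonneg x y) (mul_self_nonneg _)
  have hE := green_formula w hsymm u v f f hf'
  have hd0 : 0 ≤ f u - f v := by
    have : 0 ≤ 2 * (f u - f v) := by
      rw [← hE]
      exact Finset.sum_nonneg fun x _ => Finset.sum_nonneg fun y _ => hterm x y
    linarith
  have hd : 0 < f u - f v := by
    refine lt_of_le_of_ne hd0 fun h0 => ?_
    rw [← h0, mul_zero, Finset.sum_eq_zero_iff_of_nonneg
      fun x _ => Finset.sum_nonneg fun y _ => hterm x y] at hE
    have hu := (Finset.sum_eq_zero_iff_of_nonneg fun y _ => hterm u y).1 (hE u (mem_univ u))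
    have hcur : ∑ y, w u y * (f u - f y) = 0 := by
      refine Finset.sum_eq_zero fun y hy => ?_
      rcases mul_eq_zero.1 (hu y hy) with h | h
      · exact h
      · rw [h, mul_zero]
    rw [hf' u] at hcur
    simp [huv] at hcur
  have hterm' : ∀ x y,
      0 ≤ if s(x, y) = s(u, v) then 0 else w x y * (f x - f y) * (f x - f y) := fun x y => by
    split_ifs
    · exact le_rfl
    · exact hterm x y
  have hE' := green_without_edge w hsymm u v huv f f hf'
  refine ⟨mul_pos hwuv hd, ?_, fun h1 => ?_, fun hb => ?_⟩
  · have hnn : 0 ≤ 2 * (1 - w u v * (f u - f v)) * (f u - f v) := by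
      rw [← hE']
      exact Finset.sum_nonneg fun x _ => Finset.sum_nonneg fun y _ => hterm' x y
    have := nonneg_of_mul_nonneg_left hnn hd
    linarith
  · rw [SimpleGraph.isBridge_iff]
    rintro ⟨p⟩
    rw [h1, sub_self, mul_zero, zero_mul, Finset.sum_eq_zero_iff_of_nonneg
      fun x _ => Finset.sum_nonneg fun y _ => hterm' x y] at hE'
    have hedge : ∀ x y, (G.deleteEdges {s(u, v)}).Adj x y → f x = f y := by
      intro x y hxy
      rw [SimpleGraph.deleteEdges_adj, Set.mem_singleton_iff, hG] at hxy
      have := (Finset.sum_eq_zero_iff_of_nonneg fun y _ => hterm' x y).1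
        (hE' x (mem_univ x)) y (mem_univ y)
      rw [if_neg hxy.2, mul_assoc] at this
      have := mul_self_eq_zero.1 ((mul_eq_zero.1 this).resolve_left hxy.1.2.ne')
      linarith
    have hwalk : ∀ a b, (G.deleteEdges {s(u, v)}).Walk a b → f a = f b := by
      intro a b q
      induction q with
      | nil => rfl
      | cons h _ ih => exact (hedge _ _ h).trans ih
    rw [hwalk u v p, sub_self] at hd
    exact lt_irrefl _ hd
  · classical
    rw [SimpleGraph.isBridge_iff] at hb
    have hS := green_without_edge w hsymm u v huv f
      (fun x => if (G.deleteEdges {s(u, v)}).Reachable u x then 1 else 0) hf'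
    rw [Finset.sum_eq_zero] at hS
    · simp only [SimpleGraph.Reachable.refl, if_true, if_neg hb] at hS
      linarith
    · intro x _
      refine Finset.sum_eq_zero fun y _ => ?_
      refine ite_eq_left_iff.2 fun he => ?_
      rcases (hnonneg x y).eq_or_lt with hw0 | hpos
      · rw [← hw0, zero_mul, zero_mul]
      -- A surviving edge stays inside one component, so the indicator agrees at its ends.
      · have hadj : (G.deleteEdges {s(u, v)}).Adj x y := by
          rw [SimpleGraph.deleteEdges_adj, Set.mem_singleton_iff, hG]
          exact ⟨⟨fun h => hpos.ne' (h ▸ hdiag x), hpos⟩, he⟩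
        have hiff : (G.deleteEdges {s(u, v)}).Reachable u x ↔
            (G.deleteEdges {s(u, v)}).Reachable u y :=
          ⟨fun h => h.trans hadj.reachable, fun h => h.trans hadj.symm.reachable⟩
        simp only [hiff, sub_self, mul_zero]
end
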